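/- Let Ψ be a parse tree all of whose nodes are green (the strong invariant), and let Δ(Ψ) be the parse tree obtained from Ψ by replacing some leaf by a new inner node v having two leaf children (as effected on the formula by an insertion update — leaf insertion or subdivision — of the represented tree). Then Δ(Ψ) contains no red node, and every yellow node of Δ(Ψ) lies on lp⁻¹(v); in particular Δ(Ψ) satisfies the weak invariant. -/

import Mathlib

/-! ### Parse trees

A parse tree is a finite binary tree in which every inner node has exactly
two children.  Nodes of a parse tree are identified either with the subtree
rooted at them, or with the path (list of booleans, `false` = left,
`true` = right) leading to them from the root. -/

inductive PTree : Type
  | leaf : PTree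
  | node : PTree → PTree → PTree

namespace PTree

/-- The height of a parse tree: the maximal number of nodes on a path from
the root to a leaf (a leaf has height 1). -/
def height : PTree → ℕ
  | leaf => 1
  | node l r => 1 + max l.height r.height

/-- The number of leaves `‖Ψ‖` of a parse tree. -/
def leaves : PTree → ℕ
  | leaf => 1
  | node l r => l.leaves + r.leaves

/-- `balance(v)`: height of the right subtree minus height of the left
subtree (0 for a leaf). -/
def bal : PTree → ℤ
  | leaf => 0
  | node l r => (r.height : ℤ) - (l.height : ℤ)

/-- The absolute balance `|balance(v)|`. -/
def abal (t : PTree) : ℤ := |t.bal|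

/-- `B(Ψ)`: the sum of the absolute balances of all (inner) nodes. -/
def totalBal : PTree → ℤ
  | leaf => 0
  | node l r => |(r.height : ℤ) - (l.height : ℤ)| + l.totalBal + r.totalBal

def isLeaf : PTree → Prop
  | leaf => True
  | node _ _ => False

/-- A node is *green* if `height(Ψ_v) ≤ 10·log₂‖Ψ_v‖` (leaves are green by
convention). -/
def Green (t : PTree) : Prop :=
  t.isLeaf ∨ (t.height : ℝ) ≤ 10 * Real.logb 2 (t.leaves : ℝ)

/-- A node is *yellow* if `height(Ψ_v) − 1 ≤ 10·log₂‖Ψ_v‖ < height(Ψ_v)`. -/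
def Yellow (t : PTree) : Prop :=
  ¬ t.isLeaf ∧ 10 * Real.logb 2 (t.leaves : ℝ) < (t.height : ℝ) ∧
    (t.height : ℝ) - 1 ≤ 10 * Real.logb 2 (t.leaves : ℝ)

/-- A node is *red* if it is neither green nor yellow. -/
def Red (t : PTree) : Prop := ¬ t.Green ∧ ¬ t.Yellow

/-- `IsSubtree t s`: `t` is the subtree of `s` rooted at some node of `s`. -/
inductive IsSubtree : PTree → PTree → Prop
  | refl (t : PTree) : IsSubtree t t
  | left {t l r : PTree} : IsSubtree t l → IsSubtree t (node l r)
  | right {t l r : PTree} : IsSubtree t r → IsSubtree t (node l r)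

/-- The subtree rooted at the node reached by following the path `p`
(`false` = left child, `true` = right child), if it exists. -/
def subtreeAt : PTree → List Bool → Option PTree
  | t, [] => some t
  | leaf, _ :: _ => none
  | node l _, false :: p => subtreeAt l p
  | node _ r, true :: p => subtreeAt r p

/-- Replace the subtree at path `p` by `s`. -/
def replaceAt : PTree → List Bool → PTree → PTree
  | _, [], s => s
  | leaf, _ :: _, _ => leaf
  | node l r, false :: p, s => node (replaceAt l p s) r
  | node l r, true :: p, s => node l (replaceAt r p s)

/-- `onLongPath t p`: the node of `t` reached by the path `p` lies on the
long path `lp(root of t)`.  The long path of `v` is `v` itself if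
`balance(v) = 0` (in particular if `v` is a leaf) and otherwise continues
into the strictly deeper subtree. -/
def onLongPath : PTree → List Bool → Prop
  | _, [] => True
  | leaf, _ :: _ => False
  | node l r, false :: p => r.height < l.height ∧ onLongPath l p
  | node l r, true :: p => l.height < r.height ∧ onLongPath r p

/-- The long path `lp(v)` of (the subtree rooted at) `v`, as the list of the
subtrees rooted at its nodes. -/
def lpList : PTree → List PTree
  | leaf => [leaf]
  | node l r =>
    if l.height = r.height then [node l r]
    else if l.height < r.height then node l r :: lpList r
    else node l r :: lpList l

/-- `IsComb t a b` : `t` is an inner node whose two subtrees are `a` and `b`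
(in either order). -/
def IsComb (t a b : PTree) : Prop := t = node a b ∨ t = node b a

end PTree

/-!
Replacing a subtree by one with at least as many leaves and height at most one larger costs no
ancestor any leaves and raises its height by at most one, so a green ancestor becomes at worst
yellow. If it does turn yellow, its height has grown; and the height of a node grows only when the
modified child has itself grown and is now strictly the deeper one, so the long path of a yellow
ancestor leads all the way down to the place of the replacement.
-/

namespace PTree

variable {s t old new : PTree} {p q : List Bool}

theorem isSubtree_of_subtreeAt (h : s.subtreeAt p = some t) : IsSubtree t s := by
  induction p generalizing s with
  | nil =>
    obtain rfl : s = t := by simpa only [subtreeAt, Option.some.injEq] using h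
    exact .refl _
  | cons b p ih =>
    match s, b with
    | leaf, _ => simp only [subtreeAt, reduceCtorEq] at h
    | node _ _, false => exact .left (ih h)
    | node _ _, true => exact .right (ih h)

theorem subtreeAt_append (s : PTree) (p q : List Bool) :
    s.subtreeAt (p ++ q) = (s.subtreeAt p).bind (subtreeAt · q) := by
  induction p generalizing s with
  | nil => simp only [List.nil_append, subtreeAt, Option.bind_some]
  | cons b p ih =>
    cases s <;> cases b <;>
      simp only [List.cons_append, subtreeAt, ih, Option.bind_none]

theorem not_isLeaf_of_subtreeAt (hp : p ≠ []) (h : s.subtreeAt p = some t) : ¬ s.isLeaf := by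
  cases s <;> cases p <;> simp_all [subtreeAt, isLeaf]

theorem subtreeAt_replaceAt_append_left (s new : PTree) (p q : List Bool) :
    (s.replaceAt (p ++ q) new).subtreeAt p = (s.subtreeAt p).map (replaceAt · q new) := by
  induction p generalizing s with
  | nil => simp only [List.nil_append, subtreeAt, Option.map_some]
  | cons b p ih =>
    cases s <;> cases b <;>
      simp only [List.cons_append, replaceAt, subtreeAt, ih, Option.map_none]

theorem subtreeAt_replaceAt_append_right (s new : PTree) (p q : List Bool) :
    (s.replaceAt q new).subtreeAt (q ++ p) = (s.subtreeAt q).bind fun _ => new.subtreeAt p := by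
  induction q generalizing s with
  | nil => simp only [List.nil_append, replaceAt, subtreeAt, Option.bind_some]
  | cons b q ih =>
    cases s <;> cases b <;>
      simp only [List.cons_append, replaceAt, subtreeAt, ih, Option.bind_none]

theorem subtreeAt_replaceAt_of_not_prefix (s new : PTree) (hpq : ¬ p <+: q) (hqp : ¬ q <+: p) :
    (s.replaceAt q new).subtreeAt p = s.subtreeAt p := by
  induction p generalizing s q with
  | nil => exact absurd List.nil_prefix hpq
  | cons b p ih =>
    cases q with
    | nil => exact absurd List.nil_prefix hqp
    | cons c q =>
      cases s <;> cases b <;> cases c <;>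
        simp_all [replaceAt, subtreeAt, List.cons_prefix_cons]

theorem leaves_replaceAt_add (new : PTree) (hq : s.subtreeAt q = some old) :
    (s.replaceAt q new).leaves + old.leaves = s.leaves + new.leaves := by
  induction q generalizing s with
  | nil =>
    obtain rfl : s = old := by simpa only [subtreeAt, Option.some.injEq] using hq
    simp only [replaceAt, Nat.add_comm]
  | cons b q ih =>
    match s, b with
    | leaf, _ => simp only [subtreeAt, reduceCtorEq] at hq
    | node _ _, false | node _ _, true =>
      have hchild := ih hq
      simp only [replaceAt, leaves]
      omega

theorem height_replaceAt_le_add {k : ℕ} (hq : s.subtreeAt q = some old)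
    (hheight : new.height ≤ old.height + k) :
    (s.replaceAt q new).height ≤ s.height + k := by
  induction q generalizing s with
  | nil =>
    obtain rfl : s = old := by simpa only [subtreeAt, Option.some.injEq] using hq
    simpa only [replaceAt] using hheight
  | cons b q ih =>
    match s, b with
    | leaf, _ => simp only [subtreeAt, reduceCtorEq] at hq
    | node _ _, false | node _ _, true =>
      have hchild := ih hq
      simp only [replaceAt, height]
      omega

theorem onLongPath_replaceAt_of_height_lt (h : s.height < (s.replaceAt q new).height) :
    onLongPath (s.replaceAt q new) q := by
  induction q generalizing s with
  | nil => simp only [onLongPath]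
  | cons b q ih =>
    match s, b with
    | leaf, _ => simp only [replaceAt, lt_self_iff_false] at h
    | node _ _, false | node _ _, true =>
      simp only [replaceAt, height] at h
      exact ⟨by omega, ih (by omega)⟩

theorem isSubtree_or_eq_replaceAt_of_subtreeAt (hq : s.subtreeAt q = some old)
    (ht : (s.replaceAt q new).subtreeAt p = some t) :
    IsSubtree t new ∨ IsSubtree t s ∨
      ∃ u q', q = p ++ q' ∧ IsSubtree u s ∧ ¬ u.isLeaf ∧ u.subtreeAt q' = some old ∧
        u.replaceAt q' new = t := by
  by_cases hqp : q <+: p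
  · obtain ⟨p', rfl⟩ := hqp
    rw [subtreeAt_replaceAt_append_right, hq, Option.bind_some] at ht
    exact .inl (isSubtree_of_subtreeAt ht)
  by_cases hpq : p <+: q
  · obtain ⟨q', rfl⟩ := hpq
    rw [subtreeAt_replaceAt_append_left, Option.map_eq_some_iff] at ht
    obtain ⟨u, hu, rfl⟩ := ht
    rw [subtreeAt_append, hu, Option.bind_some] at hq
    have hq' : q' ≠ [] := by
      rintro rfl
      simp only [List.append_nil, List.prefix_rfl, not_true_eq_false] at hqp
    exact .inr (.inr ⟨u, q', rfl, isSubtree_of_subtreeAt hu, not_isLeaf_of_subtreeAt hq' hq, hq,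
      rfl⟩)
  · rw [subtreeAt_replaceAt_of_not_prefix s new hpq hqp] at ht
    exact .inr (.inl (isSubtree_of_subtreeAt ht))

theorem leaves_pos (t : PTree) : 0 < t.leaves := by
  induction t with
  | leaf => exact Nat.one_pos
  | node _ _ ihl _ => exact Nat.add_pos_left ihl _

theorem Green.not_red (h : t.Green) : ¬ t.Red := fun hred => hred.1 h

theorem Green.not_yellow (h : t.Green) : ¬ t.Yellow := by
  rintro ⟨hinner, hlt, -⟩
  exact h.elim hinner hlt.not_ge

theorem not_red_of_height_sub_one_le (h : (t.height : ℝ) - 1 ≤ 10 * Real.logb 2 t.leaves) :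
    ¬ t.Red := fun ⟨hgreen, hyellow⟩ =>
  hyellow ⟨fun hleaf => hgreen (.inl hleaf), not_le.mp fun hle => hgreen (.inr hle), h⟩

theorem Green.height_le_of_leaves_le (hs : s.Green) (hinner : ¬ s.isLeaf)
    (h : s.leaves ≤ t.leaves) : (s.height : ℝ) ≤ 10 * Real.logb 2 t.leaves := by
  have hpos : (0 : ℝ) < s.leaves := mod_cast s.leaves_pos
  calc (s.height : ℝ) ≤ 10 * Real.logb 2 s.leaves := hs.resolve_left hinner
    _ ≤ 10 * Real.logb 2 t.leaves := by gcongr; norm_num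

theorem green_leaf : leaf.Green := .inl trivial

theorem green_of_isSubtree_node_leaf_leaf (h : IsSubtree t (node leaf leaf)) : t.Green := by
  rcases h with _ | ⟨⟨⟩⟩ | ⟨⟨⟩⟩
  · exact .inr (by norm_num [height, leaves])
  · exact green_leaf
  · exact green_leaf

theorem Green.height_le_replaceAt (hs : s.Green) (hinner : ¬ s.isLeaf)
    (hq : s.subtreeAt q = some old) (hleaves : old.leaves ≤ new.leaves) :
    (s.height : ℝ) ≤ 10 * Real.logb 2 (s.replaceAt q new).leaves := by
  have hcount := leaves_replaceAt_add new hq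
  exact hs.height_le_of_leaves_le hinner (by omega)

theorem Green.not_red_replaceAt (hs : s.Green) (hinner : ¬ s.isLeaf)
    (hq : s.subtreeAt q = some old) (hleaves : old.leaves ≤ new.leaves)
    (hheight : new.height ≤ old.height + 1) : ¬ (s.replaceAt q new).Red := by
  have hgrowth : ((s.replaceAt q new).height : ℝ) ≤ s.height + 1 :=
    mod_cast height_replaceAt_le_add hq hheight
  apply not_red_of_height_sub_one_le
  linarith [hs.height_le_replaceAt hinner hq hleaves]

theorem Green.onLongPath_replaceAt_of_yellow (hs : s.Green) (hinner : ¬ s.isLeaf)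
    (hq : s.subtreeAt q = some old) (hleaves : old.leaves ≤ new.leaves)
    (hyellow : (s.replaceAt q new).Yellow) : onLongPath (s.replaceAt q new) q := by
  apply onLongPath_replaceAt_of_height_lt
  exact_mod_cast (hs.height_le_replaceAt hinner hq hleaves).trans_lt hyellow.2.1

end PTree

open PTree in
theorem insertion_preserves_weak_invariant_general {Ψ old new : PTree} {q : List Bool}
    (hq : Ψ.subtreeAt q = some old) (hgreen : ∀ t, IsSubtree t Ψ → t.Green)
    (hnew : ∀ t, IsSubtree t new → t.Green) (hleaves : old.leaves ≤ new.leaves)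
    (hheight : new.height ≤ old.height + 1) :
    (∀ p t, (Ψ.replaceAt q new).subtreeAt p = some t → ¬ t.Red) ∧
    (∀ p t, (Ψ.replaceAt q new).subtreeAt p = some t → t.Yellow →
      p <+: q ∧ onLongPath t (q.drop p.length)) := by
  have hnode (p : List Bool) (t : PTree) (ht : (Ψ.replaceAt q new).subtreeAt p = some t) :
      ¬ t.Red ∧ (t.Yellow → p <+: q ∧ onLongPath t (q.drop p.length)) := by
    rcases isSubtree_or_eq_replaceAt_of_subtreeAt hq ht with
      htnew | htΨ | ⟨u, q', rfl, huΨ, hinner, hold, rfl⟩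
    · exact ⟨(hnew t htnew).not_red, fun hy => absurd hy (hnew t htnew).not_yellow⟩
    · exact ⟨(hgreen t htΨ).not_red, fun hy => absurd hy (hgreen t htΨ).not_yellow⟩
    · rw [List.drop_left]
      exact ⟨(hgreen u huΨ).not_red_replaceAt hinner hold hleaves hheight, fun hy =>
        ⟨List.prefix_append p q',
          (hgreen u huΨ).onLongPath_replaceAt_of_yellow hinner hold hleaves hy⟩⟩
  exact ⟨fun p t ht => (hnode p t ht).1, fun p t ht => (hnode p t ht).2⟩

/-- Let `Ψ` be a parse tree all of whose nodes are green
(the strong invariant), and let `Δ(Ψ)` be obtained from `Ψ` by replacing the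
leaf at path `q` by a new inner node `v` with two leaf children (the effect
of an insertion update on the formula).  Then `Δ(Ψ)` contains no red node,
and every yellow node of `Δ(Ψ)` lies on `lp⁻¹(v)`; in particular `Δ(Ψ)`
satisfies the weak invariant. -/
theorem insertion_preserves_weak_invariant
    (Ψ : PTree) (q : List Bool)
    (hleaf : Ψ.subtreeAt q = some PTree.leaf)
    (hgreen : ∀ t, PTree.IsSubtree t Ψ → t.Green) :
    (∀ p t, (Ψ.replaceAt q (.node .leaf .leaf)).subtreeAt p = some t → ¬ t.Red) ∧
    (∀ p t, (Ψ.replaceAt q (.node .leaf .leaf)).subtreeAt p = some t → t.Yellow →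
      p <+: q ∧ PTree.onLongPath t (q.drop p.length)) :=
  insertion_preserves_weak_invariant_general hleaf hgreen
    (fun _ => PTree.green_of_isSubtree_node_leaf_leaf) (by decide) (by decide)
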